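/- Let n ≥ 3, let ω = s_{i_1} s_{i_2} ⋯ s_{i_k} be a reduced subword of Ω_n, and let σ ∈ S_n be the permutation represented by ω. If σ s_{n−1} ≰ v_n in the Bruhat order, then h(ω) = 2; equivalently, d(ω) = ℓ(ω) − n + 2. -/

import Mathlib

/-!
The word `Ω_n` consists of the blocks `s_j s_{j-1}`, and in a subword `ω` of it two consecutive
letters `i, i - 1` always come from one and the same block. Hence `ℓ(ω) - d(ω)` is the number of
blocks met by `ω`, and the claim says that `ω` meets all `n - 2` of them.

Suppose a block `s_j s_{j-1}` is missed, and write `ω = A B` with `A` before and `B` after that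
block. By repeated braid moves, `B s_{n-1}` equals the product of a subword of
`s_j · (s_{j+1} s_j ⋯ s_{n-1} s_{n-2})` (`exists_sublist_cons_blocks`); the extra letter `s_j` is
supplied by the missed block, so `σ s_{n-1}` is the product of a subword of `Ω_n`
(`length_eq_or_exists_sublist`). By the deletion property (`exists_reduced_sublist`) that subword
can be taken reduced, and `Ω_n` is a reduced expression of `v_n`, so `σ s_{n-1} ≤ v_n`.

The deletion property rests on the strong exchange property (`exchange`), which also gives the
criterion `reduced_cons` for a word to remain reduced when a letter is put in front of it.
-/

/-- The simple transposition `s i = (i, i+1)` acting on `ℕ` (1-based positions);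
multiplying a permutation on the right by `st i` swaps the entries in positions
`i` and `i+1` of its one-line notation. -/
def st (i : ℕ) : Equiv.Perm ℕ := Equiv.swap i (i + 1)

/-- The permutation represented by a word, i.e. a list `[i₁, …, i_k]` of indices,
namely the product `s_{i₁} s_{i₂} ⋯ s_{i_k}`. -/
def wprod (l : List ℕ) : Equiv.Perm ℕ := (l.map st).prod

/-- `σ` belongs to the symmetric group `S_n` on `{1, …, n}`:
it fixes `0` and every `m > n`. -/
def MemS (n : ℕ) (σ : Equiv.Perm ℕ) : Prop := ∀ m : ℕ, m < 1 ∨ n < m → σ m = m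

/-- The Coxeter length `ℓ(σ)`: the minimal number of simple transpositions
`s_i` (`i ≥ 1`) in an expression of `σ` as their product. -/
noncomputable def len (σ : Equiv.Perm ℕ) : ℕ :=
  sInf {k : ℕ | ∃ l : List ℕ, (∀ i ∈ l, 1 ≤ i) ∧ l.length = k ∧ wprod l = σ}

/-- `l` is a reduced word: a word in the `s_i` (`i ≥ 1`) whose number of letters
equals the length of the permutation it represents. -/
def Reduced (l : List ℕ) : Prop := (∀ i ∈ l, 1 ≤ i) ∧ l.length = len (wprod l)

/-- Bruhat order, characterized by the subword property: `u ≤ v` iff some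
(equivalently, every) reduced expression of `v` has a subword (sublist) that is a
reduced expression of `u`. -/
def BruhatLE (u v : Equiv.Perm ℕ) : Prop :=
  ∃ l : List ℕ, Reduced l ∧ wprod l = v ∧
    ∃ l' : List ℕ, l'.Sublist l ∧ Reduced l' ∧ wprod l' = u

/-- `s_i ∈ D_R(σ)`, i.e. `σ(i) > σ(i+1)`. -/
def DR (σ : Equiv.Perm ℕ) (i : ℕ) : Prop := σ (i + 1) < σ i

/-- The word `Ω_n = s_2 s_1 s_3 s_2 s_4 s_3 ⋯ s_{n-1} s_{n-2}`,
the concatenation of the blocks `s_j s_{j-1}` for `j = 2, …, n-1`. -/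
def Omega (n : ℕ) : List ℕ := (List.range (n - 2)).flatMap fun j => [j + 2, j + 1]

/-- `d(ω)`: the number of indices `1 ≤ t < k` with `i_t - i_{t+1} = 1`,
for a word `ω = s_{i₁} ⋯ s_{i_k}`. -/
def dstat (l : List ℕ) : ℕ := (l.zip l.tail).countP fun p => p.1 == p.2 + 1

/-- `v` is the permutation of `S_n` with one-line notation `3 4 ⋯ n 1 2`. -/
def IsVn (n : ℕ) (v : Equiv.Perm ℕ) : Prop :=
  (∀ i : ℕ, 1 ≤ i → i ≤ n - 2 → v i = i + 2) ∧ v (n - 1) = 1 ∧ v n = 2 ∧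
    ∀ m : ℕ, m < 1 ∨ n < m → v m = m

/-! ### Exchange and deletion -/

lemma wprod_nil : wprod [] = 1 := rfl

lemma wprod_cons (i : ℕ) (l : List ℕ) : wprod (i :: l) = st i * wprod l := by
  simp [wprod]

lemma wprod_append (l m : List ℕ) : wprod (l ++ m) = wprod l * wprod m := by
  simp [wprod]

lemma st_mul_self (i : ℕ) : st i * st i = 1 := Equiv.swap_mul_self _ _

lemma st_mul_cancel (i : ℕ) (w : Equiv.Perm ℕ) : st i * (st i * w) = w := by
  rw [← mul_assoc, st_mul_self, one_mul]

lemma st_inv (i : ℕ) : (st i)⁻¹ = st i := Equiv.swap_inv _ _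

lemma st_apply (i x : ℕ) : st i x = if x = i then i + 1 else if x = i + 1 then i else x :=
  Equiv.swap_apply_def _ _ _

lemma wprod_cons_inv_apply (i : ℕ) (l : List ℕ) (x : ℕ) :
    (wprod (i :: l))⁻¹ x = (wprod l)⁻¹ (st i x) := by
  rw [wprod_cons, mul_inv_rev, st_inv, Equiv.Perm.mul_apply]

lemma st_braid (a : ℕ) : st (a + 1) * (st a * st (a + 1)) = st a * (st (a + 1) * st a) := by
  ext x
  simp only [Equiv.Perm.mul_apply, st_apply]
  grind

/-- Strong exchange: if the values `x < y` occur in the wrong order in the permutation of a word,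
then swapping them amounts to deleting one letter of the word. -/
lemma exchange (l : List ℕ) (x y : ℕ) (hxy : x < y)
    (h : (wprod l)⁻¹ y < (wprod l)⁻¹ x) :
    ∃ l' : List ℕ, l'.Sublist l ∧ l'.length + 1 = l.length ∧
      wprod l' = Equiv.swap x y * wprod l := by
  induction l generalizing x y with
  | nil => simp [wprod_nil] at h; omega
  | cons a m ih =>
    by_cases hc : x = a ∧ y = a + 1
    · obtain ⟨rfl, rfl⟩ := hc
      refine ⟨m, List.sublist_cons_self _ _, by simp, ?_⟩
      rw [wprod_cons]
      exact (st_mul_cancel x _).symm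
    · have hlt : st a x < st a y := by
        simp only [st_apply]
        grind
      rw [wprod_cons_inv_apply, wprod_cons_inv_apply] at h
      obtain ⟨m', hm, hlen, hprod⟩ := ih _ _ hlt h
      refine ⟨a :: m', hm.cons_cons a, by simpa using hlen, ?_⟩
      rw [wprod_cons, wprod_cons, hprod, Equiv.swap_apply_apply, st_inv]
      simp only [← mul_assoc, st_mul_self, one_mul]

lemma len_le {l : List ℕ} (hl : ∀ i ∈ l, 1 ≤ i) : len (wprod l) ≤ l.length :=
  Nat.sInf_le ⟨l, hl, rfl, rfl⟩

lemma exists_len_word {l : List ℕ} (hl : ∀ i ∈ l, 1 ≤ i) :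
    ∃ r : List ℕ, (∀ i ∈ r, 1 ≤ i) ∧ r.length = len (wprod l) ∧ wprod r = wprod l :=
  Nat.sInf_mem (s := {k : ℕ | ∃ r : List ℕ, (∀ i ∈ r, 1 ≤ i) ∧ r.length = k ∧ wprod r = wprod l})
    ⟨l.length, l, hl, rfl, rfl⟩

lemma reduced_nil : Reduced [] := by
  refine ⟨by simp, ?_⟩
  have := len_le (l := []) (by simp)
  simp at this ⊢
  omega

/-- A letter `i` may be put in front of a reduced word whenever the values `i` and `i + 1` occur
in increasing order in its permutation. -/
lemma reduced_cons {i : ℕ} {m : List ℕ} (hi : 1 ≤ i) (hm : Reduced m)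
    (h : (wprod m)⁻¹ i < (wprod m)⁻¹ (i + 1)) : Reduced (i :: m) := by
  have hpos : ∀ j ∈ i :: m, 1 ≤ j := by
    simpa using ⟨hi, hm.1⟩
  obtain ⟨r, hr, hrl, hrp⟩ := exists_len_word hpos
  refine ⟨hpos, le_antisymm ?_ (len_le hpos)⟩
  -- In `s_i w` the two values are inverted, so a shortest word for it loses a letter to give `w`.
  have hinv : (wprod r)⁻¹ (i + 1) < (wprod r)⁻¹ i := by
    rw [hrp, wprod_cons_inv_apply, wprod_cons_inv_apply]
    simpa [st_apply] using h
  obtain ⟨r', hs, hl', hp⟩ := exchange r i (i + 1) (Nat.lt_succ_self i) hinv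
  have hp' : wprod r' = wprod m := by
    rw [hp, hrp, wprod_cons]
    exact st_mul_cancel i _
  have := len_le (l := r') (fun j hj => hr j (hs.subset hj))
  rw [hp', ← hm.2] at this
  rw [← hrl, List.length_cons]
  omega

/-- Deletion property: every word has a reduced subword with the same product. -/
lemma exists_reduced_sublist (l : List ℕ) (hl : ∀ i ∈ l, 1 ≤ i) :
    ∃ m : List ℕ, m.Sublist l ∧ Reduced m ∧ wprod m = wprod l := by
  induction l with
  | nil => exact ⟨[], List.Sublist.refl _, reduced_nil, rfl⟩
  | cons i l ih =>
    obtain ⟨m, hml, hm, hmp⟩ := ih (fun j hj => hl j (List.mem_cons_of_mem _ hj))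
    have hi : 1 ≤ i := hl i List.mem_cons_self
    rcases lt_or_ge ((wprod m)⁻¹ i) ((wprod m)⁻¹ (i + 1)) with h | h
    · exact ⟨i :: m, hml.cons_cons i, reduced_cons hi hm h, by rw [wprod_cons, wprod_cons, hmp]⟩
    · have hne : (wprod m)⁻¹ (i + 1) ≠ (wprod m)⁻¹ i := fun he => by
        have := (wprod m)⁻¹.injective he
        omega
      obtain ⟨m', hs, hlen, hp⟩ := exchange m i (i + 1) (Nat.lt_succ_self i) (lt_of_le_of_ne h hne)
      have hpos : ∀ j ∈ m', 1 ≤ j := fun j hj => hm.1 j (hs.subset hj)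
      refine ⟨m', (hs.trans hml).cons i, ⟨hpos, le_antisymm ?_ (len_le hpos)⟩, ?_⟩
      -- Reducedness of `m'`: a word for `s_i w` yields one for `w` with one more letter.
      · obtain ⟨r, hr, hrl, hrp⟩ := exists_len_word hpos
        have hcons : wprod (i :: r) = wprod m := by
          rw [wprod_cons, hrp, hp]
          exact st_mul_cancel i _
        have := len_le (l := i :: r) (by simpa using ⟨hi, hr⟩)
        rw [hcons, ← hm.2, List.length_cons] at this
        omega
      · rw [hp, wprod_cons, hmp]
        rfl

/-! ### The word `Ω_n` is a reduced expression of `v_n` -/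

/-- The word `s_{a+1} s_a s_{a+2} s_{a+1} ⋯ s_{a+k} s_{a+k-1}` of `k` consecutive blocks; thus
`Ω_n` is `blocks 1 (n - 2)`. -/
def blocks (a : ℕ) : ℕ → List ℕ
  | 0 => []
  | k + 1 => (a + 1) :: a :: blocks (a + 1) k

lemma flatMap_range_eq_blocks (a k : ℕ) :
    ((List.range k).flatMap fun j => [j + a + 1, j + a]) = blocks a k := by
  induction k generalizing a with
  | zero => rfl
  | succ k ih =>
    rw [List.range_succ_eq_map, List.flatMap_cons, List.flatMap_map, blocks, ← ih]
    simp [Nat.succ_eq_add_one, Nat.add_comm, Nat.add_left_comm]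

lemma Omega_eq_blocks (n : ℕ) : Omega n = blocks 1 (n - 2) :=
  flatMap_range_eq_blocks 1 (n - 2)

lemma le_of_mem_blocks {a k i : ℕ} (h : i ∈ blocks a k) : a ≤ i := by
  induction k generalizing a with
  | zero => simp [blocks] at h
  | succ k ih =>
    simp only [blocks, List.mem_cons] at h
    rcases h with h | h | h
    · omega
    · omega
    · have := ih h
      omega

lemma wprod_blocks_apply (a k x : ℕ) :
    wprod (blocks a k) x =
      if a ≤ x ∧ x < a + k then x + 2 else if x = a + k then a else
        if x = a + k + 1 then a + 1 else x := by
  induction k generalizing a with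
  | zero => simp [blocks, wprod_nil]; grind
  | succ k ih =>
    simp only [blocks, wprod_cons, Equiv.Perm.mul_apply, ih, st_apply]
    grind

lemma reduced_blocks (a k : ℕ) (ha : 1 ≤ a) : Reduced (blocks a k) := by
  induction k generalizing a with
  | zero => exact reduced_nil
  | succ k ih =>
    have h0 : (wprod (blocks (a + 1) k))⁻¹ a = a := by
      rw [Equiv.Perm.inv_eq_iff_eq, wprod_blocks_apply]; grind
    have h1 : (wprod (blocks (a + 1) k))⁻¹ (a + 1) = a + 1 + k := by
      rw [Equiv.Perm.inv_eq_iff_eq, wprod_blocks_apply]; grind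
    have h2 : (wprod (blocks (a + 1) k))⁻¹ (a + 2) = a + 1 + k + 1 := by
      rw [Equiv.Perm.inv_eq_iff_eq, wprod_blocks_apply]; grind
    refine reduced_cons (by omega) (reduced_cons ha (ih (a + 1) (by omega)) ?_) ?_
    · omega
    · rw [wprod_cons_inv_apply, wprod_cons_inv_apply]
      have e1 : st a (a + 1) = a := by simp [st_apply]
      have e2 : st a (a + 1 + 1) = a + 2 := by simp [st_apply]; omega
      rw [e1, e2]
      omega

lemma wprod_Omega {n : ℕ} (hn : 3 ≤ n) {v : Equiv.Perm ℕ} (hv : IsVn n v) :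
    wprod (Omega n) = v := by
  obtain ⟨h1, h2, h3, h4⟩ := hv
  ext x
  rw [Omega_eq_blocks, wprod_blocks_apply]
  split_ifs with c1 c2 c3
  · rw [h1 x (by omega) (by omega)]
  · rw [show x = n - 1 by omega, h2]
  · rw [show x = n by omega, h3]
  · rw [h4 x (by omega)]

/-! ### Subwords of `Ω_n` -/

lemma sublist_blocks_succ {a k : ℕ} {ω : List ℕ} (h : ω.Sublist (blocks a (k + 1))) :
    ∃ C ω₁ : List ℕ, ω = C ++ ω₁ ∧ ω₁.Sublist (blocks (a + 1) k) ∧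
      (C = [] ∨ C = [a] ∨ C = [a + 1] ∨ C = [a + 1, a]) := by
  obtain ⟨C, ω₁, rfl, hC, h₁⟩ :=
    List.sublist_append_iff.1 (show ω.Sublist ([a + 1, a] ++ blocks (a + 1) k) from h)
  refine ⟨C, ω₁, rfl, h₁, ?_⟩
  have : C ∈ [a + 1, a].sublists' := List.mem_sublists'.2 hC
  simp at this
  tauto

/-- The braid moves `s_a s_{a+1} s_a = s_{a+1} s_a s_{a+1}` carry a final letter `s_{a+k}` through
the blocks to the front, where it becomes `s_a`; this version is for subwords. -/
lemma exists_sublist_cons_blocks {a k : ℕ} {ω : List ℕ} (h : ω.Sublist (blocks a k)) :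
    ∃ ω' : List ℕ, ω'.Sublist (a :: blocks a k) ∧ wprod ω' = wprod ω * st (a + k) := by
  induction k generalizing a ω with
  | zero =>
    obtain rfl : ω = [] := by simpa [blocks] using h
    exact ⟨[a], by simp [blocks], by simp [wprod]⟩
  | succ k ih =>
    obtain ⟨C, ω₁, rfl, h₁, hC⟩ := sublist_blocks_succ h
    have hC' : C.Sublist [a + 1, a] := by
      rcases hC with rfl | rfl | rfl | rfl <;> simp
    obtain ⟨ω₂, h₂, hp⟩ := ih h₁
    rw [show a + 1 + k = a + (k + 1) by omega] at hp
    rw [wprod_append, mul_assoc, ← hp]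
    rcases List.sublist_cons_iff.1 h₂ with h₃ | ⟨ω₃, rfl, h₃⟩
    · exact ⟨C ++ ω₂, (hC'.append h₃).cons a, wprod_append _ _⟩
    · rcases hC with rfl | rfl | rfl | rfl
      · exact ⟨(a + 1) :: ω₃, ((h₃.cons a).cons_cons (a + 1)).cons a, by simp [wprod_nil]⟩
      · exact ⟨a :: (a + 1) :: ω₃, ((h₃.cons a).cons_cons (a + 1)).cons_cons a,
          by simp [wprod_cons, wprod_nil]⟩
      · exact ⟨ω₃, ((h₃.cons a).cons (a + 1)).cons a,
          by simp [wprod_cons, wprod_nil, st_mul_cancel]⟩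
      · refine ⟨a :: (a + 1) :: a :: ω₃,
          ((h₃.cons_cons a).cons_cons (a + 1)).cons_cons a, ?_⟩
        have := congrArg (· * wprod ω₃) (st_braid a)
        simpa [wprod_cons, wprod_nil, mul_assoc] using this.symm

lemma dstat_cons_cons (x y : ℕ) (l : List ℕ) :
    dstat (x :: y :: l) = dstat (y :: l) + if x = y + 1 then 1 else 0 := by
  simp [dstat, List.countP_cons]

lemma dstat_cons_of_le {x : ℕ} {l : List ℕ} (h : ∀ y ∈ l, x ≤ y) :
    dstat (x :: l) = dstat l := by
  cases l with
  | nil => simp [dstat]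
  | cons y l =>
    have := h y List.mem_cons_self
    rw [dstat_cons_cons, if_neg (by omega), Nat.add_zero]

/-- A subword `ω` of `k` blocks either meets all of them, and then `ℓ(ω) - d(ω) = k`, or it misses
one, and then multiplication on the right by `s_{a+k}` yields the product of another subword. -/
lemma length_eq_or_exists_sublist {a k : ℕ} {ω : List ℕ} (h : ω.Sublist (blocks a k)) :
    ω.length = k + dstat ω ∨
      ∃ ω' : List ℕ, ω'.Sublist (blocks a k) ∧ wprod ω' = wprod ω * st (a + k) := by
  induction k generalizing a ω with
  | zero =>
    obtain rfl : ω = [] := by simpa [blocks] using h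
    left
    simp [dstat]
  | succ k ih =>
    obtain ⟨C, ω₁, rfl, h₁, hC⟩ := sublist_blocks_succ h
    have hC' : C.Sublist [a + 1, a] := by
      rcases hC with rfl | rfl | rfl | rfl <;> simp
    have hidx : a + 1 + k = a + (k + 1) := by omega
    by_cases hnil : C = []
    · subst hnil
      obtain ⟨ω₂, h₂, hp⟩ := exists_sublist_cons_blocks h₁
      refine Or.inr ⟨ω₂, h₂.trans ?_, by rw [hp, hidx, List.nil_append]⟩
      exact (List.sublist_cons_self a _).cons_cons (a + 1)
    · rcases ih h₁ with hlen | ⟨ω₂, h₂, hp⟩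
      · left
        have hge : ∀ y ∈ ω₁, a + 1 ≤ y := fun y hy => le_of_mem_blocks (h₁.subset hy)
        have d1 : dstat ((a + 1) :: ω₁) = dstat ω₁ := dstat_cons_of_le hge
        have d0 : dstat (a :: ω₁) = dstat ω₁ :=
          dstat_cons_of_le fun y hy => (Nat.le_succ a).trans (hge y hy)
        rcases hC with rfl | rfl | rfl | rfl
        · exact absurd rfl hnil
        · simp [d0]; omega
        · simp [d1]; omega
        · simp [dstat_cons_cons, d0]; omega
      · refine Or.inr ⟨C ++ ω₂, hC'.append h₂, ?_⟩
        rw [wprod_append, wprod_append, hp, hidx, mul_assoc]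

/-- Let `ω` be a reduced subword of `Ω_n` and `σ` the permutation it represents.
If `σ s_{n-1} ≰ v_n` in the Bruhat order, then `h(ω) = n - ℓ(ω) + d(ω) = 2`,
equivalently `n + d(ω) = ℓ(ω) + 2`. -/
theorem lemma3 (n : ℕ) (hn : 3 ≤ n) (v : Equiv.Perm ℕ) (hv : IsVn n v)
    (ω : List ℕ) (hsub : ω.Sublist (Omega n)) (hred : Reduced ω)
    (hnble : ¬ BruhatLE (wprod ω * st (n - 1)) v) :
    n + dstat ω = ω.length + 2 := by
  have hΩ : Reduced (Omega n) := by
    rw [Omega_eq_blocks]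
    exact reduced_blocks 1 (n - 2) le_rfl
  rw [Omega_eq_blocks] at hsub
  rcases length_eq_or_exists_sublist hsub with h | ⟨ω', h', hp⟩
  · omega
  · rw [← Omega_eq_blocks] at h'
    rw [show 1 + (n - 2) = n - 1 by omega] at hp
    obtain ⟨m, hm, hmr, hmp⟩ := exists_reduced_sublist ω' fun i hi => hΩ.1 i (h'.subset hi)
    exact absurd ⟨Omega n, hΩ, wprod_Omega hn hv, m, hm.trans h', hmr, hmp.trans hp⟩ hnble
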